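/- arXiv:2108.00619 — 6 statements merged into one kernel-verified Lean document; each statement's English description precedes it below -/
import Mathlib

section
/- For any c ∈ ℝ² and c₀ ∈ ℝ, the piecewise linear H¹ IFE function v : ℝ² → ℝ defined by v(x) = (M_ρ c)·(x − x^m) + c₀ when (x − x^m)·n ≥ 0 and v(x) = c·(x − x^m) + c₀ when (x − x^m)·n < 0 is continuous on all of ℝ²; that is, the two linear pieces agree on the interface line L. -/
/-!
For a unit normal `n`, the jump matrix is `M_ρ = I + (ρ - 1) n nᵀ`, so the two linear pieces differ
by `(ρ - 1) (c·n) ((x - xᵐ)·n)` (`Mmat_mulVec_dotProduct`). This vanishes on the line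
`(x - xᵐ)·n = 0`, and two continuous functions that agree on the common boundary of the two closed
half-planes glue to a continuous function.
-/

open Matrix

/-- The IFE jump matrix `M_ρ` for a unit normal `n = (n 0, n 1)` and parameter `ρ`. -/
noncomputable def Mmat (n : Fin 2 → ℝ) (ρ : ℝ) : Matrix (Fin 2) (Fin 2) ℝ :=
  !![n 1 ^ 2 + ρ * n 0 ^ 2, (ρ - 1) * n 0 * n 1;
     (ρ - 1) * n 0 * n 1, n 0 ^ 2 + ρ * n 1 ^ 2]

/-- The jump across the interface is the rank-one term `(ρ - 1) (c·n) (y·n)`, because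
`M_ρ = I + (ρ - 1) n nᵀ` for a unit normal `n`. -/
theorem Mmat_mulVec_dotProduct (n : Fin 2 → ℝ) (hn : n 0 ^ 2 + n 1 ^ 2 = 1)
    (ρ : ℝ) (c y : Fin 2 → ℝ) :
    ((Mmat n ρ) *ᵥ c) ⬝ᵥ y = c ⬝ᵥ y + (ρ - 1) * (c ⬝ᵥ n) * (y ⬝ᵥ n) := by
  simp only [Mmat, Matrix.mulVec, dotProduct, Fin.sum_univ_two, Matrix.of_apply,
    Matrix.cons_val_zero, Matrix.cons_val_one]
  linear_combination (c 0 * y 0 + c 1 * y 1) * hn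

/-- the piecewise linear `H¹` IFE function
`v(x) = (M_ρ c)·(x − xᵐ) + c₀` on `{(x − xᵐ)·n ≥ 0}` and
`v(x) = c·(x − xᵐ) + c₀` on `{(x − xᵐ)·n < 0}` is continuous on all of `ℝ²`;
in particular the two linear pieces agree on the interface line `L`. -/
theorem IFE_piecewise_linear_continuous (n : Fin 2 → ℝ) (hn : n 0 ^ 2 + n 1 ^ 2 = 1)
    (ρ : ℝ) (hρ : 0 < ρ) (xm c : Fin 2 → ℝ) (c0 : ℝ) :
    Continuous (fun x : Fin 2 → ℝ =>
      if 0 ≤ (x - xm) ⬝ᵥ n then ((Mmat n ρ) *ᵥ c) ⬝ᵥ (x - xm) + c0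
      else c ⬝ᵥ (x - xm) + c0) ∧
    (∀ x : Fin 2 → ℝ, (x - xm) ⬝ᵥ n = 0 →
      ((Mmat n ρ) *ᵥ c) ⬝ᵥ (x - xm) + c0 = c ⬝ᵥ (x - xm) + c0) := by
  have agree : ∀ x : Fin 2 → ℝ, (x - xm) ⬝ᵥ n = 0 →
      ((Mmat n ρ) *ᵥ c) ⬝ᵥ (x - xm) + c0 = c ⬝ᵥ (x - xm) + c0 := by
    intro x hx
    rw [Mmat_mulVec_dotProduct n hn, hx, mul_zero, add_zero]
  have cont : ∀ a : Fin 2 → ℝ, Continuous fun x : Fin 2 → ℝ => a ⬝ᵥ (x - xm) + c0 :=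
    fun a => (continuous_const.dotProduct (continuous_id.sub continuous_const)).add
      continuous_const
  refine ⟨Continuous.if_le (cont _) (cont _) continuous_const
    ((continuous_id.sub continuous_const).dotProduct continuous_const) ?_, agree⟩
  intro x hx
  exact agree x hx.symm
end

section
/- Let β⁺, β⁻, α⁺, α⁻ > 0, ρ = β⁻/β⁺, c ∈ ℝ², c₀ ∈ ℝ, and let v⁺(x) = M_ρ c + (c₀/α⁺) J(x − x^m), v⁻(x) = c + (c₀/α⁻) J(x − x^m) be the H(curl) IFE field. Then: (i) v⁺(x)·t = v⁻(x)·t for every x ∈ L (tangential continuity on the interface line); (ii) curl v⁺ = 2c₀/α⁺ and curl v⁻ = 2c₀/α⁻ everywhere, so that α⁺ curl v⁺ = α⁻ curl v⁻; (iii) β⁺ (v⁺(x^m)·n) = β⁻ (v⁻(x^m)·n). In other words, the explicit representation satisfies all three approximate jump conditions of the H(curl) IFE space. -/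
/-!
The jump matrix fixes the tangent `t` and scales the normal: `(M_ρ c)·t = c·t` and
`(M_ρ c)·n = ρ (c·n)`, because `n` is a unit vector. Moreover `J y · t = -(y·n)`, so the
rotational part of either field has no tangential component on the interface line, and it vanishes
at `xᵐ`. This gives the tangential and normal conditions. Both fields have the form
`a + k J(x - xᵐ)` with `a` constant, whose curl is `2k` (`curl2_const_add_smul_Jrot`).
-/

open Matrix

/-- The tangential vector `t = (n₂, −n₁)`. -/
noncomputable def tvec (n : Fin 2 → ℝ) : Fin 2 → ℝ := ![n 1, -n 0]

/-- The `π/2` rotation `J(y₁, y₂) = (−y₂, y₁)`. -/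
noncomputable def Jrot (y : Fin 2 → ℝ) : Fin 2 → ℝ := ![-(y 1), y 0]

/-- The scalar curl `curl w = ∂₁w₂ − ∂₂w₁` of a planar vector field. -/
noncomputable def curl2 (w : (Fin 2 → ℝ) → Fin 2 → ℝ) (x : Fin 2 → ℝ) : ℝ :=
  fderiv ℝ (fun y => w y 1) x (Pi.single 0 1) - fderiv ℝ (fun y => w y 0) x (Pi.single 1 1)

theorem Mmat_mulVec_dotProduct_tvec (n : Fin 2 → ℝ) (hn : n 0 ^ 2 + n 1 ^ 2 = 1) (ρ : ℝ)
    (c : Fin 2 → ℝ) : (Mmat n ρ *ᵥ c) ⬝ᵥ tvec n = c ⬝ᵥ tvec n := by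
  simp [Mmat, tvec, mulVec, dotProduct, Fin.sum_univ_two]
  linear_combination (c 0 * n 1 - c 1 * n 0) * hn

theorem Mmat_mulVec_dotProduct_normal (n : Fin 2 → ℝ) (hn : n 0 ^ 2 + n 1 ^ 2 = 1) (ρ : ℝ)
    (c : Fin 2 → ℝ) : (Mmat n ρ *ᵥ c) ⬝ᵥ n = ρ * (c ⬝ᵥ n) := by
  simp [Mmat, mulVec, dotProduct, Fin.sum_univ_two]
  linear_combination ρ * (c 0 * n 0 + c 1 * n 1) * hn

theorem Jrot_dotProduct_tvec (n y : Fin 2 → ℝ) : Jrot y ⬝ᵥ tvec n = -(y ⬝ᵥ n) := by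
  simp [Jrot, tvec, dotProduct, Fin.sum_univ_two]

theorem Jrot_zero : Jrot 0 = 0 := by
  ext i; fin_cases i <;> simp [Jrot]

theorem curl2_const_add_smul_Jrot (a xm : Fin 2 → ℝ) (k : ℝ) (x : Fin 2 → ℝ) :
    curl2 (fun y => a + k • Jrot (y - xm)) x = 2 * k := by
  have hproj (i : Fin 2) : HasFDerivAt (fun y : Fin 2 → ℝ => y i)
      (ContinuousLinearMap.proj (R := ℝ) (φ := fun _ : Fin 2 => ℝ) i) x := hasFDerivAt_apply i x
  have h1 : HasFDerivAt (fun y : Fin 2 → ℝ => (a + k • Jrot (y - xm)) 1)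
      (k • ContinuousLinearMap.proj (R := ℝ) (φ := fun _ : Fin 2 => ℝ) 0) x := by
    simpa [Jrot] using (((hproj 0).sub_const (xm 0)).const_mul k).const_add (a 1)
  have h0 : HasFDerivAt (fun y : Fin 2 → ℝ => (a + k • Jrot (y - xm)) 0)
      (k • -ContinuousLinearMap.proj (R := ℝ) (φ := fun _ : Fin 2 => ℝ) 1) x := by
    simpa [Jrot] using (((hproj 1).sub_const (xm 1)).neg.const_mul k).const_add (a 0)
  rw [curl2, h1.fderiv, h0.fderiv]
  simp
  ring

/-- the explicit `H(curl)` IFE field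
`v⁺(x) = M_ρ c + (c₀/α⁺) J(x − xᵐ)`, `v⁻(x) = c + (c₀/α⁻) J(x − xᵐ)` satisfies
(i) tangential continuity on the interface line, (ii) `curl v± = 2c₀/α±` everywhere so
that `α⁺ curl v⁺ = α⁻ curl v⁻`, and (iii) `β⁺ (v⁺(xᵐ)·n) = β⁻ (v⁻(xᵐ)·n)`. -/
theorem IFE_Hcurl_jump_conditions (n : Fin 2 → ℝ) (hn : n 0 ^ 2 + n 1 ^ 2 = 1)
    (βp βm αp αm : ℝ) (hβp : 0 < βp) (hβm : 0 < βm) (hαp : 0 < αp) (hαm : 0 < αm)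
    (ρ : ℝ) (hρ : ρ = βm / βp) (xm c : Fin 2 → ℝ) (c0 : ℝ)
    (vp vm : (Fin 2 → ℝ) → Fin 2 → ℝ)
    (hvp : vp = fun x => (Mmat n ρ) *ᵥ c + (c0 / αp) • Jrot (x - xm))
    (hvm : vm = fun x => c + (c0 / αm) • Jrot (x - xm)) :
    (∀ x : Fin 2 → ℝ, (x - xm) ⬝ᵥ n = 0 → vp x ⬝ᵥ tvec n = vm x ⬝ᵥ tvec n) ∧
    (∀ x : Fin 2 → ℝ, curl2 vp x = 2 * c0 / αp ∧ curl2 vm x = 2 * c0 / αm) ∧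
    (∀ x : Fin 2 → ℝ, αp * curl2 vp x = αm * curl2 vm x) ∧
    βp * (vp xm ⬝ᵥ n) = βm * (vm xm ⬝ᵥ n) := by
  subst hvp hvm hρ
  have hcp (x) := curl2_const_add_smul_Jrot (Mmat n (βm / βp) *ᵥ c) xm (c0 / αp) x
  have hcm (x) := curl2_const_add_smul_Jrot c xm (c0 / αm) x
  refine ⟨fun x hx => ?_, fun x => ⟨?_, ?_⟩, fun x => ?_, ?_⟩
  · simp only [add_dotProduct, smul_dotProduct, Jrot_dotProduct_tvec, hx,
      Mmat_mulVec_dotProduct_tvec n hn, neg_zero, smul_zero]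
  · rw [hcp, mul_div_assoc]
  · rw [hcm, mul_div_assoc]
  · rw [hcp, hcm]
    field_simp
  · simp only [sub_self, Jrot_zero, smul_zero, add_zero, Mmat_mulVec_dotProduct_normal n hn]
    field_simp
end

section
/- Let β⁺, β⁻, α⁺, α⁻ > 0 and ρ = β⁻/β⁺. Suppose the pair (v⁺, v⁻) of lowest-order Nédélec fields v^±(x) = a^± + b^± J(x) satisfies the H(curl) IFE jump conditions (tangential continuity on L, α⁺ curl v⁺ = α⁻ curl v⁻, and β⁺ (v⁺(x^m)·n) = β⁻ (v⁻(x^m)·n)) and curl v⁺ = 0. Then curl v⁻ = 0 and there exists c ∈ ℝ² such that v⁺ is the constant field M_ρ c and v⁻ is the constant field c. That is, the kernel of curl in the local H(curl) IFE space consists exactly of the gradient pairs of H¹ IFE functions, which is the exactness of the local IFE de Rham complex at the middle slot. -/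
/-!
A lowest-order Nédélec field `a + b J` has constant curl `2b`. Hence `curl v⁺ = 0` forces
`b⁺ = 0`, the curl jump condition with `α⁻ ≠ 0` forces `b⁻ = 0`, and both fields are constant.
The other two jump conditions at `x^m` then say `a⁺ · t = a⁻ · t` and `a⁺ · n = ρ (a⁻ · n)`.
Since `n` and `t` form an orthonormal basis and `M_ρ = t tᵀ + ρ n nᵀ`, this is exactly
`a⁺ = M_ρ a⁻`.
-/

open Matrix

/-- The curl of a lowest-order Nédélec field `a + b J` is the constant `2b`. -/
theorem curl2_nedelec (a : Fin 2 → ℝ) (b : ℝ) (x : Fin 2 → ℝ) :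
    curl2 (fun x => a + b • Jrot x) x = 2 * b := by
  have h1 : HasFDerivAt (fun y : Fin 2 → ℝ => (a + b • Jrot y) 1)
      (b • (ContinuousLinearMap.proj 0 : (Fin 2 → ℝ) →L[ℝ] ℝ)) x := by
    simpa [Jrot] using ((hasFDerivAt_apply (𝕜 := ℝ) (0 : Fin 2) x).const_mul b).const_add (a 1)
  have h0 : HasFDerivAt (fun y : Fin 2 → ℝ => (a + b • Jrot y) 0)
      (-(b • (ContinuousLinearMap.proj 1 : (Fin 2 → ℝ) →L[ℝ] ℝ))) x := by
    simpa [Jrot] using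
      ((hasFDerivAt_apply (𝕜 := ℝ) (1 : Fin 2) x).const_mul b).fun_neg.const_add (a 0)
  rw [curl2, h1.fderiv, h0.fderiv]
  simp
  ring

/-- The matrix `M_ρ` keeps the tangential component and scales the normal one by `ρ`, and a
vector is determined by these two components. -/
theorem eq_Mmat_mulVec (n : Fin 2 → ℝ) (hn : n 0 ^ 2 + n 1 ^ 2 = 1) (ρ : ℝ) (u c : Fin 2 → ℝ)
    (ht : u ⬝ᵥ tvec n = c ⬝ᵥ tvec n) (hnor : u ⬝ᵥ n = ρ * (c ⬝ᵥ n)) :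
    u = Mmat n ρ *ᵥ c := by
  simp only [tvec, dotProduct, Fin.sum_univ_two, cons_val_zero, cons_val_one] at ht hnor
  -- Each coordinate is recovered from the expansion `u = (u · n) n + (u · t) t`.
  ext i
  fin_cases i
  · simp [Mmat, mulVec, dotProduct, Fin.sum_univ_two]
    linear_combination n 0 * hnor + n 1 * ht - u 0 * hn
  · simp [Mmat, mulVec, dotProduct, Fin.sum_univ_two]
    linear_combination n 1 * hnor - n 0 * ht - u 1 * hn

/-- if a pair of lowest-order Nédélec fields satisfies the `H(curl)` IFE
jump conditions and `curl v⁺ = 0`, then `curl v⁻ = 0` and there is `c ∈ ℝ²` with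
`v⁺ ≡ M_ρ c` and `v⁻ ≡ c` (exactness of the local IFE de Rham complex at the middle
slot). -/
theorem IFE_Hcurl_kernel_is_gradients (n : Fin 2 → ℝ) (hn : n 0 ^ 2 + n 1 ^ 2 = 1)
    (βp βm αp αm : ℝ) (hβp : 0 < βp) (hβm : 0 < βm) (hαp : 0 < αp) (hαm : 0 < αm)
    (ρ : ℝ) (hρ : ρ = βm / βp) (xm : Fin 2 → ℝ)
    (ap am : Fin 2 → ℝ) (bp bm : ℝ)
    (vp vm : (Fin 2 → ℝ) → Fin 2 → ℝ)
    (hvp : vp = fun x => ap + bp • Jrot x) (hvm : vm = fun x => am + bm • Jrot x)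
    (htan : ∀ x : Fin 2 → ℝ, (x - xm) ⬝ᵥ n = 0 → vp x ⬝ᵥ tvec n = vm x ⬝ᵥ tvec n)
    (hcurl : ∀ x : Fin 2 → ℝ, αp * curl2 vp x = αm * curl2 vm x)
    (hnormal : βp * (vp xm ⬝ᵥ n) = βm * (vm xm ⬝ᵥ n))
    (hker : ∀ x : Fin 2 → ℝ, curl2 vp x = 0) :
    (∀ x : Fin 2 → ℝ, curl2 vm x = 0) ∧
    ∃ c : Fin 2 → ℝ, (∀ x : Fin 2 → ℝ, vp x = (Mmat n ρ) *ᵥ c) ∧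
      (∀ x : Fin 2 → ℝ, vm x = c) := by
  subst hvp hvm
  simp only [curl2_nedelec] at hcurl hker ⊢
  have hbp : bp = 0 := by linarith [hker 0]
  have hbm : bm = 0 := by
    have h := hcurl 0
    rw [hbp, mul_zero, mul_zero, eq_comm, mul_eq_zero] at h
    linarith [h.resolve_left hαm.ne']
  subst hbp hbm
  simp only [zero_smul, add_zero, mul_zero] at *
  refine ⟨fun _ => trivial, am, fun _ => ?_, fun _ => rfl⟩
  refine eq_Mmat_mulVec n hn ρ ap am (htan xm (by simp)) ?_
  rw [hρ, div_mul_eq_mul_div, eq_div_iff hβp.ne']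
  linarith
end

section
/- Let β⁺, β⁻ > 0, ρ = β⁻/β⁺, and M'_ρ = ρ⁻¹ M_ρ. For vectors a⁺, a⁻ ∈ ℝ², the identity a⁺ = M'_ρ a⁻ holds if and only if a⁺·n = a⁻·n and (β⁺)⁻¹ (a⁺·t) = (β⁻)⁻¹ (a⁻·t). (This characterizes the matrix M' encoding the normal continuity and β⁻¹-weighted tangential jump conditions of H(div) IFE fields.) -/
/-!
In the orthonormal frame `(n, t)` the jump matrix is diagonal: `M_ρ = ρ n nᵀ + t tᵀ`, so `ρ⁻¹ M_ρ`
fixes the normal component of a vector and scales its tangential component by `ρ⁻¹ = β⁺ / β⁻`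
(`dotProduct_normal_jump`, `dotProduct_tvec_jump`). As a vector of the plane is determined by its
two components in this frame (`eq_iff_frame`), the equation `a⁺ = ρ⁻¹ M_ρ a⁻` is equivalent to the
two scalar jump conditions.
-/

open Matrix

lemma eq_iff_frame (n : Fin 2 → ℝ) (hn : n 0 ^ 2 + n 1 ^ 2 = 1) (a b : Fin 2 → ℝ) :
    a = b ↔ a ⬝ᵥ n = b ⬝ᵥ n ∧ a ⬝ᵥ tvec n = b ⬝ᵥ tvec n := by
  refine ⟨fun h => by simp [h], fun ⟨h₁, h₂⟩ => ?_⟩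
  simp only [dotProduct, tvec, Fin.sum_univ_two, cons_val_zero, cons_val_one] at h₁ h₂
  -- Each coordinate of `a - b` is recovered from `a - b = ((a - b)·n) n + ((a - b)·t) t`.
  ext i
  fin_cases i
  · change a 0 = b 0
    linear_combination n 0 * h₁ + n 1 * h₂ - (a 0 - b 0) * hn
  · change a 1 = b 1
    linear_combination n 1 * h₁ - n 0 * h₂ - (a 1 - b 1) * hn

lemma dotProduct_normal_jump (n : Fin 2 → ℝ) (hn : n 0 ^ 2 + n 1 ^ 2 = 1) {ρ : ℝ} (hρ : ρ ≠ 0)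
    (a : Fin 2 → ℝ) : ((ρ⁻¹ • Mmat n ρ) *ᵥ a) ⬝ᵥ n = a ⬝ᵥ n := by
  have h : (Mmat n ρ *ᵥ a) ⬝ᵥ n = ρ * (a ⬝ᵥ n) := by
    simp only [Mmat, mulVec, dotProduct, Fin.sum_univ_two, of_apply, cons_val', cons_val_zero,
      cons_val_one, cons_val_fin_one]
    linear_combination ρ * (a 0 * n 0 + a 1 * n 1) * hn
  rw [smul_mulVec, smul_dotProduct, h, smul_eq_mul, inv_mul_cancel_left₀ hρ]

lemma dotProduct_tvec_jump (n : Fin 2 → ℝ) (hn : n 0 ^ 2 + n 1 ^ 2 = 1) (ρ : ℝ)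
    (a : Fin 2 → ℝ) : ((ρ⁻¹ • Mmat n ρ) *ᵥ a) ⬝ᵥ tvec n = ρ⁻¹ * (a ⬝ᵥ tvec n) := by
  have h : (Mmat n ρ *ᵥ a) ⬝ᵥ tvec n = a ⬝ᵥ tvec n := by
    simp only [Mmat, tvec, mulVec, dotProduct, Fin.sum_univ_two, of_apply, cons_val',
      cons_val_zero, cons_val_one, cons_val_fin_one]
    linear_combination (a 0 * n 1 - a 1 * n 0) * hn
  rw [smul_mulVec, smul_dotProduct, h, smul_eq_mul]

/-- with `ρ = β⁻/β⁺` and `M'_ρ = ρ⁻¹ M_ρ`, `a⁺ = M'_ρ a⁻` iff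
`a⁺·n = a⁻·n` and `(β⁺)⁻¹ (a⁺·t) = (β⁻)⁻¹ (a⁻·t)`. -/
theorem Mmat_div_jump_characterization (n : Fin 2 → ℝ) (hn : n 0 ^ 2 + n 1 ^ 2 = 1)
    (βp βm : ℝ) (hβp : 0 < βp) (hβm : 0 < βm) (ρ : ℝ) (hρ : ρ = βm / βp)
    (ap am : Fin 2 → ℝ) :
    ap = (ρ⁻¹ • Mmat n ρ) *ᵥ am ↔
      (ap ⬝ᵥ n = am ⬝ᵥ n ∧ βp⁻¹ * (ap ⬝ᵥ tvec n) = βm⁻¹ * (am ⬝ᵥ tvec n)) := by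
  have hp := hβp.ne'
  have hm := hβm.ne'
  have hρ0 : ρ ≠ 0 := hρ ▸ div_ne_zero hm hp
  rw [eq_iff_frame n hn, dotProduct_normal_jump n hn hρ0, dotProduct_tvec_jump n hn, hρ, inv_div]
  refine and_congr_right fun _ => ?_
  rw [inv_mul_eq_iff_eq_mul₀ hp, div_eq_mul_inv, mul_assoc]
end

section
/- Let β⁺, β⁻ > 0, ρ = β⁻/β⁺, and M'_ρ = ρ⁻¹ M_ρ. Let S^f be the set of pairs (v⁺, v⁻) of lowest-order Raviart–Thomas fields v^±(x) = a^± + b^± x (with a^± ∈ ℝ², b^± ∈ ℝ) such that v⁺(x)·n = v⁻(x)·n for all x ∈ L, (β⁺)⁻¹ (v⁺(x^m)·t) = (β⁻)⁻¹ (v⁻(x^m)·t), and div v⁺ = div v⁻. Then S^f is a linear space, the map (c, c₀) ↦ (x ↦ M'_ρ c + c₀ (x − x^m), x ↦ c + c₀ (x − x^m)) is a linear bijection from ℝ² × ℝ onto S^f, and dim S^f = 3. (This is the explicit representation and dimension count of the local H(div) IFE space S^f_h(K).) -/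
/-!
The vectors `n` and `t` form an orthonormal basis of `ℝ²` in which `M_ρ` is diagonal:
`M_ρ n = ρ n` and `M_ρ t = t`. Hence `M'_ρ = ρ⁻¹ M_ρ` is the matrix that preserves the normal
component and multiplies the tangential one by `ρ⁻¹ = β⁺/β⁻`, i.e. `u = M'_ρ c` is equivalent to
`u·n = c·n` together with `(β⁺)⁻¹ (u·t) = (β⁻)⁻¹ (c·t)` (`eq_smul_Mmat_mulVec_iff`).

Since `div (a + b x) = 2 b`, equality of the divergences forces `b⁺ = b⁻ = c₀`, and then the
normal jump is constant on `ℝ²`, so that it vanishes on `L` as soon as it vanishes at `xᵐ`.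
The jump conditions thus say exactly `v⁺(xᵐ) = M'_ρ v⁻(xᵐ)`, and a pair in `S^f` is determined by
`c = v⁻(xᵐ)` and `c₀`. Injectivity is read off from the second component alone, and the dimension
is that of `ℝ² × ℝ`.
-/

open Matrix

/-- The divergence `div w = ∂₁w₁ + ∂₂w₂` of a planar vector field. -/
noncomputable def div2 (w : (Fin 2 → ℝ) → Fin 2 → ℝ) (x : Fin 2 → ℝ) : ℝ :=
  fderiv ℝ (fun y => w y 0) x (Pi.single 0 1) + fderiv ℝ (fun y => w y 1) x (Pi.single 1 1)

/-- This holds because `M_ρ` is symmetric with `M_ρ n = ρ n`. -/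
lemma Mmat_mulVec_dot_normal {n : Fin 2 → ℝ} (hn : n 0 ^ 2 + n 1 ^ 2 = 1) (ρ : ℝ)
    (c : Fin 2 → ℝ) : (Mmat n ρ *ᵥ c) ⬝ᵥ n = ρ * (c ⬝ᵥ n) := by
  simp only [Mmat, Matrix.mulVec, dotProduct, Fin.sum_univ_two, Matrix.of_apply,
    Matrix.cons_val_zero, Matrix.cons_val_one]
  linear_combination ρ * (c 0 * n 0 + c 1 * n 1) * hn

/-- This holds because `M_ρ` is symmetric with `M_ρ t = t`. -/
lemma Mmat_mulVec_dot_tvec {n : Fin 2 → ℝ} (hn : n 0 ^ 2 + n 1 ^ 2 = 1) (ρ : ℝ)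
    (c : Fin 2 → ℝ) : (Mmat n ρ *ᵥ c) ⬝ᵥ tvec n = c ⬝ᵥ tvec n := by
  simp only [Mmat, tvec, Matrix.mulVec, dotProduct, Fin.sum_univ_two, Matrix.of_apply,
    Matrix.cons_val_zero, Matrix.cons_val_one]
  linear_combination (c 0 * n 1 - c 1 * n 0) * hn

lemma eq_of_dot_normal_of_dot_tvec {n : Fin 2 → ℝ} (hn : n 0 ^ 2 + n 1 ^ 2 = 1)
    {u w : Fin 2 → ℝ} (h₁ : u ⬝ᵥ n = w ⬝ᵥ n) (h₂ : u ⬝ᵥ tvec n = w ⬝ᵥ tvec n) : u = w := by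
  simp only [tvec, dotProduct, Fin.sum_univ_two, Matrix.cons_val_zero,
    Matrix.cons_val_one] at h₁ h₂
  ext i
  fin_cases i
  · change u 0 = w 0
    linear_combination n 0 * h₁ + n 1 * h₂ - (u 0 - w 0) * hn
  · change u 1 = w 1
    linear_combination n 1 * h₁ - n 0 * h₂ - (u 1 - w 1) * hn

lemma eq_smul_Mmat_mulVec_iff {n : Fin 2 → ℝ} (hn : n 0 ^ 2 + n 1 ^ 2 = 1) {βp βm : ℝ}
    (hβp : 0 < βp) (hβm : 0 < βm) (u c : Fin 2 → ℝ) :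
    u = ((βm / βp)⁻¹ • Mmat n (βm / βp)) *ᵥ c ↔
      u ⬝ᵥ n = c ⬝ᵥ n ∧ βp⁻¹ * (u ⬝ᵥ tvec n) = βm⁻¹ * (c ⬝ᵥ tvec n) := by
  have hN : (((βm / βp)⁻¹ • Mmat n (βm / βp)) *ᵥ c) ⬝ᵥ n = c ⬝ᵥ n := by
    rw [Matrix.smul_mulVec, smul_dotProduct, Mmat_mulVec_dot_normal hn, smul_eq_mul]
    field_simp
  have hT : (((βm / βp)⁻¹ • Mmat n (βm / βp)) *ᵥ c) ⬝ᵥ tvec n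
      = βp * (βm⁻¹ * (c ⬝ᵥ tvec n)) := by
    rw [Matrix.smul_mulVec, smul_dotProduct, Mmat_mulVec_dot_tvec hn, smul_eq_mul]
    field_simp
  constructor
  · rintro rfl
    exact ⟨hN, by rw [hT, inv_mul_cancel_left₀ hβp.ne']⟩
  · rintro ⟨h₁, h₂⟩
    refine eq_of_dot_normal_of_dot_tvec hn (h₁.trans hN.symm) ?_
    rw [hT, ← h₂, mul_inv_cancel_left₀ hβp.ne']

lemma div2_affine (a : Fin 2 → ℝ) (b : ℝ) (x : Fin 2 → ℝ) :
    div2 (fun y => a + b • y) x = 2 * b := by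
  have h (i : Fin 2) : fderiv ℝ (fun y : Fin 2 → ℝ => (a + b • y) i) x (Pi.single i 1) = b := by
    have hd : HasFDerivAt (fun y : Fin 2 → ℝ => (a + b • y) i)
        (b • ContinuousLinearMap.proj (R := ℝ) (φ := fun _ : Fin 2 => ℝ) i) x :=
      ((hasFDerivAt_apply i x).const_mul b).const_add (a i)
    rw [hd.fderiv]
    simp
  rw [div2, h 0, h 1]
  ring

/-- the local `H(div)` IFE space `S^f` (pairs of lowest-order
Raviart–Thomas fields with normal continuity on `L`, the `β⁻¹`-weighted tangential jump
condition at `xᵐ`, and matching divergences) is a linear space, the explicit representation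
`(c, c₀) ↦ (M'_ρ c + c₀ (x − xᵐ), c + c₀ (x − xᵐ))` is a linear bijection of `ℝ² × ℝ`
onto `S^f`, and `dim S^f = 3`. -/
theorem IFE_Hdiv_space_representation (n : Fin 2 → ℝ) (hn : n 0 ^ 2 + n 1 ^ 2 = 1)
    (βp βm : ℝ) (hβp : 0 < βp) (hβm : 0 < βm) (ρ : ℝ) (hρ : ρ = βm / βp)
    (xm : Fin 2 → ℝ)
    (Sf : Set (((Fin 2 → ℝ) → Fin 2 → ℝ) × ((Fin 2 → ℝ) → Fin 2 → ℝ)))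
    (hSf : Sf = { v |
      (∃ (a : Fin 2 → ℝ) (b : ℝ), v.1 = fun x => a + b • x) ∧
      (∃ (a : Fin 2 → ℝ) (b : ℝ), v.2 = fun x => a + b • x) ∧
      (∀ x : Fin 2 → ℝ, (x - xm) ⬝ᵥ n = 0 → v.1 x ⬝ᵥ n = v.2 x ⬝ᵥ n) ∧
      βp⁻¹ * (v.1 xm ⬝ᵥ tvec n) = βm⁻¹ * (v.2 xm ⬝ᵥ tvec n) ∧
      (∀ x : Fin 2 → ℝ, div2 v.1 x = div2 v.2 x) })
    (Ψ : (Fin 2 → ℝ) × ℝ → ((Fin 2 → ℝ) → Fin 2 → ℝ) × ((Fin 2 → ℝ) → Fin 2 → ℝ))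
    (hΨ : Ψ = fun p => (fun x => (ρ⁻¹ • Mmat n ρ) *ᵥ p.1 + p.2 • (x - xm),
                        fun x => p.1 + p.2 • (x - xm))) :
    (∃ W : Submodule ℝ (((Fin 2 → ℝ) → Fin 2 → ℝ) × ((Fin 2 → ℝ) → Fin 2 → ℝ)),
      (W : Set _) = Sf ∧ Module.finrank ℝ W = 3) ∧
    IsLinearMap ℝ Ψ ∧ Function.Injective Ψ ∧ Set.range Ψ = Sf := by
  subst hρ
  have hlin : IsLinearMap ℝ Ψ := by
    subst hΨ
    constructor
    · intro p q
      ext x : 2 <;> simp only [Prod.fst_add, Prod.snd_add, Pi.add_apply, Matrix.mulVec_add] <;>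
        module
    · intro r p
      ext x : 2 <;> simp only [Prod.smul_fst, Prod.smul_snd, Pi.smul_apply, Matrix.mulVec_smul,
        smul_eq_mul] <;> module
  have hinj : Function.Injective Ψ := by
    subst hΨ
    rintro ⟨c, c₀⟩ ⟨d, d₀⟩ h
    have h₂ (x : Fin 2 → ℝ) : c + c₀ • (x - xm) = d + d₀ • (x - xm) :=
      congrFun (congrArg Prod.snd h) x
    have hc : c = d := by simpa using h₂ xm
    have hc₀ : c₀ = d₀ := by
      have h₃ := congrFun (h₂ (xm + Pi.single 0 1)) 0
      simpa [hc] using h₃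
    rw [hc, hc₀]
  have hrange : Set.range Ψ = Sf := by
    subst hΨ hSf
    ext ⟨vp, vm⟩
    constructor
    · rintro ⟨⟨c, c₀⟩, h⟩
      obtain ⟨rfl, rfl⟩ := Prod.mk.inj h
      obtain ⟨hN, hT⟩ := (eq_smul_Mmat_mulVec_iff hn hβp hβm _ c).1 rfl
      -- The affine form of a field `d + c₀ (x − xᵐ)`.
      have hform (d : Fin 2 → ℝ) :
          (fun x => d + c₀ • (x - xm)) = fun x => (d - c₀ • xm) + c₀ • x := by
        funext x
        module
      refine ⟨⟨_, _, hform _⟩, ⟨_, _, hform _⟩, fun x _ => ?_, ?_, fun x => ?_⟩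
      · simp only [add_dotProduct, hN]
      · simpa using hT
      · simp only [hform, div2_affine]
    · rintro ⟨⟨a, b, rfl⟩, ⟨a', b', rfl⟩, hN, hT, hdiv⟩
      obtain rfl : b = b' := by
        have h := hdiv 0
        simp only [div2_affine] at h
        linarith
      have hv : a + b • xm = ((βm / βp)⁻¹ • Mmat n (βm / βp)) *ᵥ (a' + b • xm) :=
        (eq_smul_Mmat_mulVec_iff hn hβp hβm _ _).2 ⟨hN xm (by simp), hT⟩
      refine ⟨(a' + b • xm, b), Prod.ext ?_ ?_⟩
      · funext x
        simp only [← hv]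
        module
      · funext x
        module
  refine ⟨⟨LinearMap.range (hlin.mk' Ψ), ?_, ?_⟩, hlin, hinj, hrange⟩
  · rw [← hrange]
    rfl
  · rw [LinearMap.finrank_range_of_inj (f := hlin.mk' Ψ) hinj]
    simp
end

section
/- Let β⁺, β⁻ > 0 and ρ = β⁻/β⁺, and let J' be the −π/2 rotation matrix, J'(y₁, y₂) = (y₂, −y₁). Then ρ · J' M_{1/ρ} (J')⁻¹ = M_ρ, and consequently the set equality {(β⁺ M_ρ c, β⁻ c) : c ∈ ℝ²} = {(J' M_{1/ρ} d, J' d) : d ∈ ℝ²} holds in ℝ² × ℝ². (This is the algebraic core of the Hodge star lemma β_h ∇S^n_h(K) = curl̃ S̃^n_h(K): multiplying the gradient pairs of the H¹ IFE space by β^± yields exactly the rotated gradient pairs of the H¹ IFE space with parameter β⁻¹, where curl̃ φ = (∂₂φ, −∂₁φ) = J' ∇φ.) -/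
/-!
Conjugating a symmetric `2 × 2` matrix by the rotation `J'` swaps its diagonal entries and negates
the off-diagonal one; scaling by `ρ` then turns `M_{1/ρ}` into `M_ρ`. In the inverse-free form
`ρ J' M_{1/ρ} = M_ρ J'` (`smul_Jmat'_mul_Mmat`), this shows that the substitution `β⁻ c = J' d`,
a bijection between the parameters `c` and `d`, identifies the two sets of pairs.
-/

open Matrix

/-- The `−π/2` rotation matrix `J'`, i.e. `J'(y₁, y₂) = (y₂, −y₁)`. -/
noncomputable def Jmat' : Matrix (Fin 2) (Fin 2) ℝ := !![0, 1; -1, 0]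

theorem Jmat'_mul_neg_self : Jmat' * -Jmat' = 1 := by
  ext i j
  fin_cases i <;> fin_cases j <;> simp [Jmat', Matrix.mul_apply, Fin.sum_univ_two]

theorem isUnit_det_Jmat' : IsUnit Jmat'.det := by
  simp [Jmat', Matrix.det_fin_two]

/-- The intertwining relation `ρ J' M_{1/ρ} = M_ρ J'`: the conjugation identity without an inverse. -/
theorem smul_Jmat'_mul_Mmat (n : Fin 2 → ℝ) {ρ : ℝ} (hρ : ρ ≠ 0) :
    ρ • (Jmat' * Mmat n (1 / ρ)) = Mmat n ρ * Jmat' := by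
  ext i j
  fin_cases i <;> fin_cases j <;>
    simp [Jmat', Mmat, Matrix.mul_apply, Fin.sum_univ_two] <;> field_simp <;> ring

/-- with `ρ = β⁻/β⁺`, `ρ · J' M_{1/ρ} (J')⁻¹ = M_ρ`, and hence
`{(β⁺ M_ρ c, β⁻ c) : c ∈ ℝ²} = {(J' M_{1/ρ} d, J' d) : d ∈ ℝ²}` (the algebraic core of
the Hodge star lemma `β_h ∇S^n_h(K) = curl̃ S̃^n_h(K)`). -/
theorem Mmat_hodge_star (n : Fin 2 → ℝ) (hn : n 0 ^ 2 + n 1 ^ 2 = 1)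
    (βp βm : ℝ) (hβp : 0 < βp) (hβm : 0 < βm) (ρ : ℝ) (hρ : ρ = βm / βp) :
    ρ • (Jmat' * Mmat n (1 / ρ) * Jmat'⁻¹) = Mmat n ρ ∧
    {p : (Fin 2 → ℝ) × (Fin 2 → ℝ) |
        ∃ c : Fin 2 → ℝ, p = (βp • ((Mmat n ρ) *ᵥ c), βm • c)} =
      {p : (Fin 2 → ℝ) × (Fin 2 → ℝ) |
        ∃ d : Fin 2 → ℝ, p = (Jmat' *ᵥ ((Mmat n (1 / ρ)) *ᵥ d), Jmat' *ᵥ d)} := by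
  have hρ0 : ρ ≠ 0 := by rw [hρ]; positivity
  have hβ : βm = ρ * βp := by rw [hρ]; field_simp
  refine ⟨?_, ?_⟩
  · rw [← Matrix.smul_mul, smul_Jmat'_mul_Mmat n hρ0,
      Matrix.mul_nonsing_inv_cancel_right _ _ isUnit_det_Jmat']
  · have key : ∀ c d : Fin 2 → ℝ, βm • c = Jmat' *ᵥ d →
        βp • (Mmat n ρ *ᵥ c) = Jmat' *ᵥ (Mmat n (1 / ρ) *ᵥ d) := by
      intro c d h
      -- It suffices to compare after multiplying by `ρ`, since `ρ β⁺ = β⁻`.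
      apply smul_right_injective _ hρ0
      change ρ • βp • (Mmat n ρ *ᵥ c) = ρ • (Jmat' *ᵥ (Mmat n (1 / ρ) *ᵥ d))
      rw [smul_smul, ← hβ, ← Matrix.mulVec_smul, h, Matrix.mulVec_mulVec, Matrix.mulVec_mulVec,
        ← smul_Jmat'_mul_Mmat n hρ0, Matrix.smul_mulVec]
    ext p
    constructor
    · rintro ⟨c, rfl⟩
      have h : βm • c = Jmat' *ᵥ (-Jmat' *ᵥ (βm • c)) := by
        rw [Matrix.mulVec_mulVec, Jmat'_mul_neg_self, Matrix.one_mulVec]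
      exact ⟨-Jmat' *ᵥ (βm • c), Prod.ext (key _ _ h) h⟩
    · rintro ⟨d, rfl⟩
      have h : βm • (βm⁻¹ • (Jmat' *ᵥ d)) = Jmat' *ᵥ d := smul_inv_smul₀ hβm.ne' _
      exact ⟨βm⁻¹ • (Jmat' *ᵥ d), Prod.ext (key _ _ h).symm h.symm⟩
end
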